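/- Every prime power q with q > 2^60 lies in G. -/

import Mathlib

/-- `memG q` says that the prime power `q` lies in the set `𝒢`: for every finite field `F`
with `q` elements and all non-zero `a, c ∈ F`, there exists a primitive root `g` of `F`
(i.e. an element of multiplicative order `q - 1`, a generator of `Fˣ`) such that
`a - c * g` is also a primitive root of `F`. -/
def memG (q : ℕ) : Prop :=
  IsPrimePow q ∧ ∀ (F : Type) [Field F] [Fintype F], Fintype.card F = q →
    ∀ a c : F, a ≠ 0 → c ≠ 0 →
      ∃ g : F, orderOf g = q - 1 ∧ orderOf (a - c * g) = q - 1

open Finset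

lemma MulChar.prod_pow_apply {ι F R : Type*} [Field F] [CommRing R] (s : Finset ι)
    (χ : ι → MulChar F R) (e : ι → ℕ) {x : F} (hx : x ≠ 0) :
    (∏ i ∈ s, χ i ^ e i : MulChar F R) x = ∏ i ∈ s, χ i x ^ e i := by
  classical
  induction s using Finset.induction_on with
  | empty => simp [MulChar.one_apply hx.isUnit]
  | insert i s hi ih =>
    have hpow : (χ i ^ e i) x = χ i x ^ e i := MulChar.pow_apply_coe (χ i) (e i) (Units.mk0 x hx)
    rw [prod_insert hi, prod_insert hi, MulChar.mul_apply, ih, hpow]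

section CharacterSums

variable {F : Type*} [Field F] [Fintype F]

/-- A complex multiplicative character of a finite field has absolute value `1` off zero. -/
lemma MulChar.norm_apply_of_ne_zero (χ : MulChar F ℂ) {x : F} (hx : x ≠ 0) : ‖χ x‖ = 1 := by
  classical
  have h := χ.apply_mem_rootsOfUnity (Units.mk0 x hx)
  simpa using Complex.norm_eq_one_of_mem_rootsOfUnity h

lemma star_jacobiSum (χ ψ : MulChar F ℂ) : star (jacobiSum χ ψ) = jacobiSum χ⁻¹ ψ⁻¹ := by
  simp only [jacobiSum, star_sum, star_mul', MulChar.star_apply']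

/-- The square-root bound for Jacobi sums of two characters that are not both trivial. -/
lemma norm_jacobiSum_le_sqrt_card {χ ψ : MulChar F ℂ} (h : ¬(χ = 1 ∧ ψ = 1)) :
    ‖jacobiSum χ ψ‖ ≤ √(Fintype.card F) := by
  have hone : (1 : ℝ) ≤ √(Fintype.card F) := by
    rw [Real.one_le_sqrt]
    exact_mod_cast Fintype.card_pos
  by_cases hχ : χ = 1
  · subst hχ
    rw [jacobiSum_one_nontrivial (by simpa using h)]
    simpa using hone
  by_cases hψ : ψ = 1
  · subst hψ
    rw [jacobiSum_comm, jacobiSum_one_nontrivial hχ]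
    simpa using hone
  by_cases hχψ : χ * ψ = 1
  · rw [eq_inv_of_mul_eq_one_right hχψ, jacobiSum_nontrivial_inv hχ, norm_neg,
      χ.norm_apply_of_ne_zero (neg_ne_zero.mpr one_ne_zero)]
    exact hone
  · have hchar : ringChar ℂ ≠ ringChar F := by
      rw [ringChar.eq_zero]
      exact (CharP.ringChar_ne_zero_of_finite F).symm
    have hmul := jacobiSum_mul_jacobiSum_inv hchar hχ hψ hχψ
    rw [← star_jacobiSum, Complex.star_def, Complex.mul_conj] at hmul
    have hsq : Complex.normSq (jacobiSum χ ψ) = Fintype.card F := by exact_mod_cast hmul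
    rw [← hsq, ← Complex.norm_def]

lemma sum_mulChar_mul_mulChar_sub (χ ψ : MulChar F ℂ) {a c : F} (ha : a ≠ 0) (hc : c ≠ 0) :
    ∑ x, χ x * ψ (a - c * x) = χ (a / c) * ψ a * jacobiSum χ ψ := by
  rw [jacobiSum, mul_sum, ← Equiv.sum_comp (Equiv.mulLeft₀ (a / c) (div_ne_zero ha hc))]
  refine sum_congr rfl fun x _ ↦ ?_
  have hx : a - c * (a / c * x) = a * (1 - x) := by field_simp
  rw [Equiv.mulLeft₀_apply, hx, map_mul, map_mul]
  ring

/-- If in a linear combination `f` of characters the trivial character dominates, then the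
correlation of `f` with `x ↦ f (a - c * x)` does not vanish over a large field. -/
lemma sum_charComb_mul_charComb_ne_zero {ι : Type*} {s : Finset ι} {i₀ : ι} (hi₀ : i₀ ∈ s)
    {w : ι → ℝ} {χ : ι → MulChar F ℂ} (hχ : ∀ i ∈ s, χ i = 1 ↔ i = i₀) {W : ℝ}
    (hw : 0 < w i₀) (hW : ∑ i ∈ s, |w i| ≤ W * w i₀) (hWF : W ^ 2 ≤ √(Fintype.card F))
    (hF : 4 < Fintype.card F) {a c : F} (ha : a ≠ 0) (hc : c ≠ 0) :
    ∑ x, (∑ i ∈ s, w i * χ i x) * (∑ j ∈ s, w j * χ j (a - c * x)) ≠ 0 := by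
  classical
  set r : ℝ := √(Fintype.card F)
  have hr : 2 < r := by
    rw [Real.lt_sqrt two_pos.le]
    have : (4 : ℝ) < Fintype.card F := by exact_mod_cast hF
    linarith
  have hr2 : r ^ 2 = Fintype.card F := Real.sq_sqrt (Nat.cast_nonneg _)
  set T : ι × ι → ℂ := fun p ↦
    w p.1 * w p.2 * (χ p.1 (a / c) * χ p.2 a * jacobiSum (χ p.1) (χ p.2)) with hT
  have hsum : ∑ x, (∑ i ∈ s, w i * χ i x) * (∑ j ∈ s, w j * χ j (a - c * x)) =
      ∑ p ∈ s ×ˢ s, T p := by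
    simp_rw [sum_mul_sum]
    rw [sum_comm, sum_product]
    refine sum_congr rfl fun i _ ↦ ?_
    rw [sum_comm]
    refine sum_congr rfl fun j _ ↦ ?_
    simp only [hT]
    rw [← sum_mulChar_mul_mulChar_sub _ _ ha hc, mul_sum]
    exact sum_congr rfl fun x _ ↦ by ring
  have hmem : (i₀, i₀) ∈ s ×ˢ s := mk_mem_product hi₀ hi₀
  have hmain : T (i₀, i₀) = ((w i₀ ^ 2 * (r ^ 2 - 2) : ℝ) : ℂ) := by
    simp only [hT, (hχ i₀ hi₀).mpr rfl, jacobiSum_one_one, hr2,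
      MulChar.one_apply ha.isUnit, MulChar.one_apply (div_ne_zero ha hc).isUnit]
    push_cast
    ring
  have hrest : ‖∑ p ∈ (s ×ˢ s).erase (i₀, i₀), T p‖ ≤
      ((∑ i ∈ s, |w i|) ^ 2 - w i₀ ^ 2) * r := by
    have hsq : (∑ i ∈ s, |w i|) ^ 2 - w i₀ ^ 2 =
        ∑ p ∈ (s ×ˢ s).erase (i₀, i₀), |w p.1| * |w p.2| := by
      rw [sq, sum_mul_sum, ← sum_product', ← add_sum_erase _ _ hmem]
      simp only [abs_mul_abs_self]
      ring
    rw [hsq, sum_mul]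
    refine norm_sum_le_of_le _ fun p hp ↦ ?_
    obtain ⟨hne, hp⟩ := mem_erase.mp hp
    obtain ⟨h₁, h₂⟩ := mem_product.mp hp
    have hJ : ‖jacobiSum (χ p.1) (χ p.2)‖ ≤ r := norm_jacobiSum_le_sqrt_card fun h ↦
      hne (Prod.ext ((hχ _ h₁).mp h.1) ((hχ _ h₂).mp h.2))
    simp only [hT, norm_mul, Complex.norm_real, Real.norm_eq_abs,
      MulChar.norm_apply_of_ne_zero _ ha, MulChar.norm_apply_of_ne_zero _ (div_ne_zero ha hc),
      one_mul]
    gcongr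
  have hbound : (∑ i ∈ s, |w i|) ^ 2 ≤ r * w i₀ ^ 2 :=
    calc (∑ i ∈ s, |w i|) ^ 2 ≤ (W * w i₀) ^ 2 := by gcongr
      _ = W ^ 2 * w i₀ ^ 2 := by ring
      _ ≤ r * w i₀ ^ 2 := by gcongr
  intro hzero
  rw [hsum, ← add_sum_erase _ _ hmem, add_eq_zero_iff_eq_neg] at hzero
  rw [← norm_neg, ← hzero, hmain, Complex.norm_real, Real.norm_eq_abs] at hrest
  have hw2 : 0 < w i₀ ^ 2 := by positivity
  nlinarith [le_abs_self (w i₀ ^ 2 * (r ^ 2 - 2)), mul_pos hw2 (sub_pos.mpr hr),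
    mul_le_mul_of_nonneg_right hbound (by linarith : (0 : ℝ) ≤ r)]

end CharacterSums

section PrimitiveRoots

variable {F : Type*} [Field F] [Fintype F]

/-- An element on which, for each prime `p ∣ #Fˣ`, some character of order `p` is nontrivial is a
primitive root. -/
lemma orderOf_eq_card_sub_one_of_mulChar_ne_one {x : F} (hx : x ≠ 0)
    (h : ∀ p ∈ (Fintype.card F - 1).primeFactors,
      ∃ χ : MulChar F ℂ, orderOf χ = p ∧ χ x ≠ 1) :
    orderOf x = Fintype.card F - 1 := by
  have hpos : 0 < Fintype.card F - 1 := Nat.sub_pos_of_lt Fintype.one_lt_card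
  refine orderOf_eq_of_pow_and_pow_div_prime hpos (FiniteField.pow_card_sub_one_eq_one x hx)
    fun p hp hdvd hpow ↦ ?_
  obtain ⟨χ, hχ, hne⟩ := h p (Nat.mem_primeFactors.mpr ⟨hp, hdvd, hpos.ne'⟩)
  obtain ⟨g, hg⟩ := IsCyclic.exists_generator (α := Fˣ)
  obtain ⟨k, hk⟩ := (mem_powers_iff_mem_zpowers (x := g)).mpr (hg (Units.mk0 x hx))
  have hxk : x = (g : F) ^ k := by
    simpa using (congrArg Units.val hk).symm
  have hordg : orderOf (g : F) = Fintype.card F - 1 := by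
    classical
    rw [orderOf_units, orderOf_eq_card_of_forall_mem_zpowers hg, Nat.card_eq_fintype_card,
      Fintype.card_units]
  rw [hxk, ← pow_mul] at hpow
  have hdiv := orderOf_dvd_of_pow_eq_one hpow
  rw [hordg] at hdiv
  obtain ⟨m, hm⟩ := hdvd
  have hm0 : 0 < m := Nat.pos_of_ne_zero fun h0 ↦ by simp [h0] at hm; omega
  rw [hm, Nat.mul_div_cancel_left m hp.pos] at hdiv
  obtain ⟨l, rfl⟩ := Nat.dvd_of_mul_dvd_mul_right hm0 hdiv
  apply hne
  rw [hxk, pow_mul, map_pow, map_pow, ← MulChar.pow_apply' χ hp.ne_zero, ← hχ, pow_orderOf_eq_one,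
    MulChar.one_apply g.isUnit, one_pow]

/-- Powers of elements of distinct prime orders multiply to `1` only if all of them are `1`. -/
lemma prod_pow_eq_one_iff_of_orderOf_eq_prime {M : Type*} [CommGroup M] {P : Finset ℕ}
    (hP : ∀ p ∈ P, p.Prime) {χ : P → M} (hχ : ∀ p, orderOf (χ p) = p) {e : P → ℕ}
    (he : ∀ p : P, e p < p) : ∏ p, χ p ^ e p = 1 ↔ e = 0 := by
  classical
  refine ⟨fun h ↦ funext fun p ↦ ?_, fun h ↦ by simp [h]⟩
  set m := ∏ r ∈ univ.erase p, (r : ℕ)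
  have hpow : χ p ^ (e p * m) = 1 := by
    have h' := congrArg (· ^ m) h
    simp only [one_pow, ← prod_pow, ← pow_mul] at h'
    rwa [← mul_prod_erase _ _ (mem_univ p), prod_eq_one, mul_one] at h'
    intro r hr
    rw [← orderOf_dvd_iff_pow_eq_one, hχ]
    exact (dvd_prod_of_mem (fun r : P ↦ (r : ℕ)) hr).mul_left _
  rw [← orderOf_dvd_iff_pow_eq_one, hχ] at hpow
  have hcop : Nat.Coprime p m := Nat.Coprime.prod_right fun r hr ↦
    (Nat.coprime_primes (hP _ p.2) (hP _ r.2)).mpr fun hpr ↦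
      (mem_erase.mp hr).1 (Subtype.ext hpr.symm)
  exact Nat.eq_zero_of_dvd_of_lt (hcop.dvd_of_dvd_mul_right hpow) (he p)

/-- The `j`-th Fourier coefficient of the indicator function of the nontrivial elements of a
quotient of order `p`. -/
noncomputable def nonresidueCoeff (p j : ℕ) : ℝ := (if j = 0 then 1 else 0) - (p : ℝ)⁻¹

lemma nonresidueCoeff_zero_pos {p : ℕ} (hp : p.Prime) : 0 < nonresidueCoeff p 0 := by
  have : (p : ℝ)⁻¹ < 1 := inv_lt_one_of_one_lt₀ (by exact_mod_cast hp.one_lt)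
  simpa [nonresidueCoeff] using this

lemma sum_abs_nonresidueCoeff {p : ℕ} (hp : p.Prime) :
    ∑ j ∈ range p, |nonresidueCoeff p j| = 2 * nonresidueCoeff p 0 := by
  obtain ⟨k, rfl⟩ := Nat.exists_eq_succ_of_ne_zero hp.ne_zero
  have hpos := nonresidueCoeff_zero_pos hp
  rw [sum_range_succ', abs_of_pos hpos]
  have hk : (k : ℝ) + 1 ≠ 0 := by positivity
  have habs : |(k : ℝ) + 1| = k + 1 := abs_of_pos (by positivity)
  simp [nonresidueCoeff, abs_inv, habs]
  field_simp
  ring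

lemma sum_nonresidueCoeff_eq_zero {p : ℕ} (hp : p ≠ 0) :
    ∑ j ∈ range p, (nonresidueCoeff p j : ℂ) = 0 := by
  have hcast : (p : ℂ) ≠ 0 := by exact_mod_cast hp
  simp [nonresidueCoeff, sum_sub_distrib, apply_ite Complex.ofReal, Nat.pos_of_ne_zero hp, hcast]

/-- The exponent vectors indexing the characters whose order is a squarefree product of primes
from `P`. -/
def primeExponents (P : Finset ℕ) : Finset (P → ℕ) := Fintype.piFinset fun p ↦ range p

/-- A field with `q ≥ 16 ^ ω(q - 1)` elements contains primitive roots `g` and `a - c * g`. -/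
theorem exists_orderOf_eq_and_orderOf_sub_eq (hF : 4 < Fintype.card F)
    (hω : 16 ^ (#(Fintype.card F - 1).primeFactors) ≤ Fintype.card F) {a c : F} (ha : a ≠ 0)
    (hc : c ≠ 0) :
    ∃ g : F, orderOf g = Fintype.card F - 1 ∧ orderOf (a - c * g) = Fintype.card F - 1 := by
  classical
  set P := (Fintype.card F - 1).primeFactors
  have hP : ∀ p ∈ P, p.Prime := fun p ↦ Nat.prime_of_mem_primeFactors
  have hexists (p : P) : ∃ χ : MulChar F ℂ, orderOf χ = p :=
    MulChar.exists_mulChar_orderOf F (Nat.dvd_of_mem_primeFactors p.2)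
      (Complex.isPrimitiveRoot_exp p (hP p p.2).ne_zero)
  choose χ hχ using hexists
  let w (e : P → ℕ) : ℝ := ∏ p : P, nonresidueCoeff p (e p)
  let f (x : F) : ℂ := ∑ e ∈ primeExponents P, w e * (∏ p, χ p ^ e p : MulChar F ℂ) x
  have hprim (x : F) (hfx : f x ≠ 0) : orderOf x = Fintype.card F - 1 := by
    have hx : x ≠ 0 := by
      rintro rfl
      exact hfx (sum_eq_zero fun e _ ↦ by simp [MulChar.map_zero])
    refine orderOf_eq_card_sub_one_of_mulChar_ne_one hx fun p hp ↦
      ⟨χ ⟨p, hp⟩, hχ _, fun h1 ↦ hfx ?_⟩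
    have hf : f x = ∏ p : P, ∑ j ∈ range p, nonresidueCoeff p j * χ p x ^ j := by
      rw [prod_univ_sum]
      refine sum_congr rfl fun e _ ↦ ?_
      rw [MulChar.prod_pow_apply _ _ _ hx, prod_mul_distrib, Complex.ofReal_prod]
    rw [hf]
    refine prod_eq_zero (mem_univ ⟨p, hp⟩) ?_
    simp only [h1, one_pow, mul_one]
    exact sum_nonresidueCoeff_eq_zero (hP p hp).ne_zero
  have hne : ∑ x, f x * f (a - c * x) ≠ 0 := by
    refine sum_charComb_mul_charComb_ne_zero (i₀ := 0) (W := 2 ^ #P) ?_ ?_ ?_ ?_ ?_ hF ha hc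
    · exact Fintype.mem_piFinset.mpr fun p ↦ mem_range.mpr (hP p p.2).pos
    · exact fun e he ↦ prod_pow_eq_one_iff_of_orderOf_eq_prime hP hχ fun p ↦
        mem_range.mp (Fintype.mem_piFinset.mp he p)
    · exact prod_pos fun p _ ↦ nonresidueCoeff_zero_pos (hP p p.2)
    · simp only [w, abs_prod, primeExponents]
      rw [← prod_univ_sum (fun p : P ↦ range p) fun p j ↦ |nonresidueCoeff p j|,
        prod_congr rfl fun (p : P) _ ↦ sum_abs_nonresidueCoeff (hP p p.2), prod_mul_distrib]
      simp
    · apply Real.le_sqrt_of_sq_le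
      calc (((2 : ℝ) ^ #P) ^ 2) ^ 2 = 16 ^ #P := by
            rw [← pow_mul, ← pow_mul, mul_comm, pow_mul]; norm_num
        _ ≤ Fintype.card F := by exact_mod_cast hω
  obtain ⟨g, -, hg⟩ := exists_ne_zero_of_sum_ne_zero hne
  exact ⟨g, hprim g (left_ne_zero_of_mul hg), hprim _ (right_ne_zero_of_mul hg)⟩

end PrimitiveRoots

lemma Nat.Prime.mem_of_lt_fiftyFour {p : ℕ} (hp : p.Prime) (h : p < 54) :
    p ∈ ({2, 3, 5, 7, 11, 13, 17, 19, 23, 29, 31, 37, 41, 43, 47, 53} : Finset ℕ) := by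
  revert hp
  interval_cases p <;> norm_num

/-- A product of at least sixteen distinct primes is at least `16` to the number of factors. -/
lemma sixteen_pow_card_le_prod_primes {s : Finset ℕ} (hs : ∀ p ∈ s, p.Prime) (hcard : 16 ≤ #s) :
    16 ^ #s ≤ ∏ p ∈ s, p := by
  let A : Finset ℕ := {2, 3, 5, 7, 11, 13, 17, 19, 23, 29, 31, 37, 41, 43, 47, 53}
  have hAcard : #A = 16 := by simp [A]
  have hAprod : 16 ^ 16 ≤ ∏ p ∈ A, p := by simp [A]
  have hs' : ∀ p ∈ s \ A, 54 ≤ p := fun p hp ↦ by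
    obtain ⟨h₁, h₂⟩ := mem_sdiff.mp hp
    by_contra! hlt
    exact h₂ ((hs p h₁).mem_of_lt_fiftyFour hlt)
  have hA' : ∀ p ∈ A \ s, p ≤ 54 := fun p hp ↦ by
    have hpA := (mem_sdiff.mp hp).1
    simp only [A, mem_insert, mem_singleton] at hpA
    omega
  have hcs := card_sdiff_add_card_inter s A
  have hcA := card_sdiff_add_card_inter A s
  rw [inter_comm] at hcA
  have hsplit : #(s \ A) = #(A \ s) + (#s - 16) := by omega
  calc 16 ^ #s = 16 ^ 16 * 16 ^ (#s - 16) := by rw [← pow_add]; congr 1; omega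
    _ ≤ (∏ p ∈ A, p) * 54 ^ (#s - 16) := by gcongr; norm_num
    _ = (∏ p ∈ A \ s, p) * (∏ p ∈ s ∩ A, p) * 54 ^ (#s - 16) := by
      rw [← prod_inter_mul_prod_sdiff A s, inter_comm, mul_comm (∏ p ∈ s ∩ A, p)]
    _ ≤ 54 ^ #(A \ s) * (∏ p ∈ s ∩ A, p) * 54 ^ (#s - 16) := by
      gcongr
      exact prod_le_pow_card _ _ _ hA'
    _ = (∏ p ∈ s ∩ A, p) * 54 ^ #(s \ A) := by rw [hsplit, pow_add]; ring
    _ ≤ (∏ p ∈ s ∩ A, p) * ∏ p ∈ s \ A, p := by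
      gcongr
      exact pow_card_le_prod _ _ _ hs'
    _ = ∏ p ∈ s, p := prod_inter_mul_prod_sdiff s A _

lemma sixteen_pow_card_primeFactors_le {q : ℕ} (h : 2 ^ 60 < q) :
    16 ^ #(q - 1).primeFactors ≤ q := by
  rcases le_or_gt 16 #(q - 1).primeFactors with hcard | hcard
  · calc 16 ^ #(q - 1).primeFactors ≤ ∏ p ∈ (q - 1).primeFactors, p :=
        sixteen_pow_card_le_prod_primes (fun p ↦ Nat.prime_of_mem_primeFactors) hcard
      _ ≤ q - 1 := Nat.le_of_dvd (by omega) (Nat.prod_primeFactors_dvd _)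
      _ ≤ q := Nat.sub_le _ _
  · calc 16 ^ #(q - 1).primeFactors ≤ 16 ^ 15 := Nat.pow_le_pow_right (by norm_num) (by omega)
      _ ≤ q := by omega

/-- Every prime power `q > 2^60` lies in `𝒢`. -/
theorem memG_of_gt_two_pow_sixty (q : ℕ) (hq : IsPrimePow q) (h : 2 ^ 60 < q) :
    memG q := by
  refine ⟨hq, ?_⟩
  rintro F _ _ rfl a c ha hc
  exact exists_orderOf_eq_and_orderOf_sub_eq (by omega) (sixteen_pow_card_primeFactors_le h) ha hc
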